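/- (Lemma 4.1 of the paper.) Let (h_i)_{i≥1} be a sequence of smooth functions ℝ → ℝ, each with compact support contained in the open half-line (0,∞) and each not identically zero. For i ≥ 1 and a ∈ ℂ define λ_i(a) = ∫_{[0,∞)} h_i(x)·exp(−a·x) dx − a·∫_{[0,∞)} h_i'(x)·exp(−a·x) dx (for real a > 0 this is the H¹([0,∞))-inner product of h_i with x ↦ exp(−a·x)). Then each λ_i is an entire function of a, the set A = {a ∈ ℂ : λ_i(a) = 0 for some i ≥ 1} is countable, and consequently there exists a real number a > 0 such that λ_i(a) ≠ 0 for every i ≥ 1. -/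

import Mathlib

/-!
Integrating by parts, the pairing of `f` with `x ↦ exp (-a x)` is
`λ(a) = (1 - a²) • L f(a) + a • f(0)`, where `L f` is the Laplace transform of `f` on `[0,∞)`; it is
entire because `f` has compact support. If `λ` vanished identically, then `a = 1` would give
`f(0) = 0`, hence `L f = 0` on the imaginary axis, where `1 - a² > 0`. There `L f` is the Fourier
transform of `f` cut off to `[0,∞)`, so `f = 0` on `[0,∞)` by Fourier inversion. A nonzero entire
function has countably many zeros, and countably many countable sets do not exhaust `(0,∞)`.
-/

section

open MeasureTheory Set
open scoped FourierTransform

theorem countable_zeros_of_analyticOnNhd {𝕜 E : Type*} [NontriviallyNormedField 𝕜]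
    [SecondCountableTopology 𝕜] [NormedAddCommGroup E] [NormedSpace 𝕜 E] {f : 𝕜 → E} {U : Set 𝕜}
    (hf : AnalyticOnNhd 𝕜 f U) (hU : IsPreconnected U) (hne : ∃ z ∈ U, f z ≠ 0) :
    (f ⁻¹' {0} ∩ U).Countable := by
  obtain ⟨z, hz, hfz⟩ := hne
  have codiscrete : (f ⁻¹' {0})ᶜ ∈ Filter.codiscreteWithin U :=
    hf.preimage_zero_mem_codiscreteWithin hfz hz ⟨⟨z, hz⟩, hU⟩
  exact (HereditarilyLindelofSpace.isLindelof _).countable_of_isDiscrete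
    (isDiscrete_of_codiscreteWithin codiscrete)

theorem integrable_of_locallyIntegrable_of_hasCompactSupport {X E : Type*} [MeasurableSpace X]
    [TopologicalSpace X] [OpensMeasurableSpace X] [NormedAddCommGroup E] {μ : Measure X} {f : X → E}
    (hf : LocallyIntegrable f μ) (hc : HasCompactSupport f) : Integrable f μ :=
  (integrableOn_iff_integrable_of_support_subset (subset_tsupport f)).1
    (hf.integrableOn_isCompact hc.isCompact)

theorem exists_pos_ofReal_notMem_of_countable {s : Set ℂ} (hs : s.Countable) :
    ∃ a : ℝ, 0 < a ∧ (a : ℂ) ∉ s := by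
  obtain ⟨a, ha, hpos⟩ := ((hs.preimage Complex.ofReal_injective).dense_compl ℝ).exists_gt 0
  exact ⟨a, hpos, ha⟩

theorem norm_cexp_neg_mul_ofReal_le {a : ℂ} {x r R : ℝ} (ha : ‖a‖ ≤ r) (hx : ‖x‖ ≤ R) :
    ‖Complex.exp (-a * x)‖ ≤ Real.exp (r * R) := by
  have hr : 0 ≤ r := (norm_nonneg a).trans ha
  calc ‖Complex.exp (-a * x)‖ ≤ Real.exp ‖-a * x‖ := Complex.norm_exp_le_exp_norm _
    _ = Real.exp (‖a‖ * ‖x‖) := by rw [norm_mul, norm_neg, Complex.norm_real]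
    _ ≤ Real.exp (r * R) := by gcongr

variable {E : Type*} [NormedAddCommGroup E] [NormedSpace ℂ E]

theorem differentiable_integral_cexp_smul {μ : Measure ℝ} {f : ℝ → E}
    (hf : LocallyIntegrable f μ) (hc : HasCompactSupport f) :
    Differentiable ℂ fun a : ℂ ↦ ∫ x, Complex.exp (-a * x) • f x ∂μ := by
  intro a₀
  obtain ⟨R, hR⟩ := hc.isCompact.isBounded.exists_norm_le
  have integrable_smul {g : ℝ → ℂ} (hg : Continuous g) : Integrable (fun x ↦ g x • f x) μ :=
    integrable_of_locallyIntegrable_of_hasCompactSupport (hf.continuous_smul hg) hc.smul_left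
  have norm_deriv_le (x : ℝ) (a : ℂ) (ha : a ∈ Metric.ball a₀ 1) :
      ‖(Complex.exp (-a * x) * -(x : ℂ)) • f x‖ ≤ Real.exp ((‖a₀‖ + 1) * R) * R * ‖f x‖ := by
    by_cases hx : f x = 0
    · simp [hx]
    have hxR : ‖x‖ ≤ R := hR x (subset_tsupport f hx)
    have haR : ‖a‖ ≤ ‖a₀‖ + 1 := by
      linarith [norm_le_norm_add_norm_sub' a a₀, mem_ball_iff_norm.1 ha]
    rw [norm_smul, norm_mul, norm_neg, Complex.norm_real]
    gcongr
    exact norm_cexp_neg_mul_ofReal_le haR hxR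
  have hasDerivAt (x : ℝ) (a : ℂ) : HasDerivAt (fun a : ℂ ↦ Complex.exp (-a * x) • f x)
      ((Complex.exp (-a * x) * -(x : ℂ)) • f x) a := by
    simpa using (((hasDerivAt_id a).neg.mul_const (x : ℂ)).cexp).smul_const (f x)
  have integrable_f : Integrable f μ :=
    integrable_of_locallyIntegrable_of_hasCompactSupport hf hc
  exact (hasDerivAt_integral_of_dominated_loc_of_deriv_le (Metric.ball_mem_nhds a₀ one_pos)
    (.of_forall fun a ↦ (integrable_smul (by fun_prop)).aestronglyMeasurable)
    (integrable_smul (by fun_prop)) (integrable_smul (by fun_prop)).aestronglyMeasurable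
    (.of_forall norm_deriv_le) (integrable_f.norm.const_mul _)
    (.of_forall fun x a _ ↦ hasDerivAt x a)).2.differentiableAt

/-- The Laplace transform of the restriction of `f` to `[0,∞)`. -/
noncomputable def halfLineLaplace (f : ℝ → E) (a : ℂ) : E :=
  ∫ x in Ici (0 : ℝ), Complex.exp (-a * x) • f x

theorem halfLineLaplace_deriv [CompleteSpace E] {f : ℝ → E} (hf : ContDiff ℝ 1 f)
    (hc : HasCompactSupport f) (a : ℂ) :
    halfLineLaplace (deriv f) a = a • halfLineLaplace f a - f 0 := by
  let e : ℝ → ℂ := fun x ↦ Complex.exp (-a * x)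
  have contDiff_e : ContDiff ℝ 1 e := (contDiff_const.mul Complex.ofRealCLM.contDiff).cexp
  have hasDerivAt_e (x : ℝ) : HasDerivAt e (-a * e x) x := by
    simpa [e, mul_comm] using ((Complex.ofRealCLM.hasDerivAt (x := x)).const_mul (-a)).cexp
  have deriv_smul (x : ℝ) : deriv (e • f) x = e x • deriv f x - a • e x • f x := by
    rw [((hasDerivAt_e x).smul (hf.differentiable_one x).hasDerivAt).deriv]
    module
  have integrable_smul : Integrable fun x ↦ e x • f x :=
    (contDiff_e.continuous.smul hf.continuous).integrable_of_hasCompactSupport hc.smul_left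
  have integrable_smul_deriv : Integrable fun x ↦ e x • deriv f x :=
    (contDiff_e.continuous.smul hf.continuous_deriv_one).integrable_of_hasCompactSupport
      hc.deriv.smul_left
  have boundary : (∫ x in Ici (0 : ℝ), e x • deriv f x) - a • ∫ x in Ici (0 : ℝ), e x • f x =
      -f 0 :=
    calc
      _ = ∫ x in Ici (0 : ℝ), (e x • deriv f x - a • e x • f x) := by
        rw [integral_sub integrable_smul_deriv.integrableOn
          (integrable_smul.fun_smul a).integrableOn, integral_smul]
      _ = ∫ x in Ioi (0 : ℝ), deriv (e • f) x := by
        simp_rw [integral_Ici_eq_integral_Ioi, deriv_smul]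
      _ = -(e • f) 0 := hc.smul_left.integral_Ioi_deriv_eq (contDiff_e.smul hf) 0
      _ = -f 0 := by simp [e]
  exact (sub_eq_iff_eq_add.1 boundary).trans (neg_add_eq_sub _ _)

theorem fourier_indicator_Ici_zero (f : ℝ → E) (t : ℝ) :
    𝓕 ((Ici 0).indicator f) t = halfLineLaplace f ((2 * Real.pi * t : ℝ) * Complex.I) := by
  rw [Real.fourier_real_eq_integral_exp_smul, halfLineLaplace,
    ← integral_indicator measurableSet_Ici]
  congr 1 with x
  have exponent_eq : ((-2 * Real.pi * x * t : ℝ) : ℂ) * Complex.I =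
      -((2 * Real.pi * t : ℝ) * Complex.I) * x := by
    push_cast
    ring
  rw [indicator_smul_apply, exponent_eq]

theorem eqOn_zero_of_halfLineLaplace_mul_I_eq_zero [CompleteSpace E] {f : ℝ → E}
    (hf : IntegrableOn f (Ici 0)) (hcont : ContinuousOn f (Ici 0))
    (hzero : ∀ t : ℝ, halfLineLaplace f (t * Complex.I) = 0) : EqOn f 0 (Ici 0) := by
  have fourier_eq_zero : 𝓕 ((Ici 0).indicator f) = 0 :=
    funext fun t ↦ (fourier_indicator_Ici_zero f t).trans (hzero _)
  have eqOn_Ioi : EqOn f 0 (Ioi 0) := by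
    intro x hx
    have eventuallyEq : (Ici 0).indicator f =ᶠ[nhds x] f :=
      eqOn_indicator.eventuallyEq_of_mem (Ici_mem_nhds hx)
    have continuousAt : ContinuousAt ((Ici 0).indicator f) x :=
      (hcont.continuousAt (Ici_mem_nhds hx)).congr eventuallyEq.symm
    have inversion : 𝓕⁻ (𝓕 ((Ici 0).indicator f)) x = (Ici 0).indicator f x :=
      (hf.integrable_indicator measurableSet_Ici).fourierInv_fourier_eq
        (by simp [fourier_eq_zero]) continuousAt
    rw [← eventuallyEq.eq_of_nhds, ← inversion, fourier_eq_zero]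
    simp [Real.fourierInv_eq]
  exact eqOn_Ioi.of_subset_closure hcont continuousOn_const Ioi_subset_Ici_self (closure_Ioi 0).ge

/-- The bilinear `H¹([0,∞))` pairing of `f` with `e(x) = exp (-a x)`, that is
`∫ (e f + e' f')` over `[0,∞)`. -/
noncomputable def sobolevExpPairing (f : ℝ → E) (a : ℂ) : E :=
  halfLineLaplace f a - a • halfLineLaplace (deriv f) a

theorem sobolevExpPairing_eq [CompleteSpace E] {f : ℝ → E} (hf : ContDiff ℝ 1 f)
    (hc : HasCompactSupport f) (a : ℂ) :
    sobolevExpPairing f a = (1 - a ^ 2) • halfLineLaplace f a + a • f 0 := by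
  rw [sobolevExpPairing, halfLineLaplace_deriv hf hc]
  module

theorem differentiable_sobolevExpPairing [CompleteSpace E] {f : ℝ → E} (hf : ContDiff ℝ 1 f)
    (hc : HasCompactSupport f) : Differentiable ℂ (sobolevExpPairing f) := by
  have differentiable_laplace : Differentiable ℂ (halfLineLaplace f) :=
    differentiable_integral_cexp_smul hf.continuous.locallyIntegrable hc
  rw [funext (sobolevExpPairing_eq hf hc)]
  fun_prop

theorem exists_sobolevExpPairing_ne_zero [CompleteSpace E] {f : ℝ → E} (hf : ContDiff ℝ 1 f)
    (hc : HasCompactSupport f) (hne : ∃ x, 0 ≤ x ∧ f x ≠ 0) : ∃ a, sobolevExpPairing f a ≠ 0 := by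
  by_contra! hzero
  simp_rw [sobolevExpPairing_eq hf hc] at hzero
  have apply_zero : f 0 = 0 := by simpa using hzero 1
  have laplace_zero (t : ℝ) : halfLineLaplace f (t * Complex.I) = 0 := by
    have one_sub_sq : 1 - (t * Complex.I) ^ 2 = ((1 + t ^ 2 : ℝ) : ℂ) := by
      rw [mul_pow, Complex.I_sq]
      push_cast
      ring
    have ne_zero : ((1 + t ^ 2 : ℝ) : ℂ) ≠ 0 := Complex.ofReal_ne_zero.2 (by positivity)
    have pairing_zero := hzero (t * Complex.I)
    rw [one_sub_sq, apply_zero, smul_zero, add_zero] at pairing_zero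
    exact (smul_eq_zero_iff_right ne_zero).1 pairing_zero
  obtain ⟨x, hx, hfx⟩ := hne
  exact hfx (eqOn_zero_of_halfLineLaplace_mul_I_eq_zero
    (hf.continuous.integrable_of_hasCompactSupport hc).integrableOn hf.continuous.continuousOn
    laplace_zero hx)

theorem sobolevExpPairing_ofReal {f : ℝ → ℝ} (hf : Differentiable ℝ f) (a : ℂ) :
    sobolevExpPairing (Complex.ofReal ∘ f) a =
      (∫ x in Ici (0 : ℝ), (f x : ℂ) * Complex.exp (-a * x)) -
        a * ∫ x in Ici (0 : ℝ), ((deriv f x : ℝ) : ℂ) * Complex.exp (-a * x) := by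
  have deriv_ofReal (x : ℝ) : deriv (Complex.ofReal ∘ f) x = deriv f x :=
    (hf x).hasDerivAt.ofReal_comp.deriv
  simp only [sobolevExpPairing, halfLineLaplace, Function.comp_apply, deriv_ofReal, smul_eq_mul,
    mul_comm]

theorem exists_a_lambda_ne_zero_general [CompleteSpace E] {ι : Type*} [Countable ι]
    (h : ι → ℝ → E) (hC1 : ∀ i, ContDiff ℝ 1 (h i)) (hsupp : ∀ i, HasCompactSupport (h i))
    (hne : ∀ i, ∃ x, 0 ≤ x ∧ h i x ≠ 0) (lam : ι → ℂ → E)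
    (hlam : ∀ i a, lam i a = sobolevExpPairing (h i) a) :
    (∀ i, Differentiable ℂ (lam i)) ∧ {a : ℂ | ∃ i, lam i a = 0}.Countable ∧
    ∃ a : ℝ, 0 < a ∧ ∀ i, lam i a ≠ 0 := by
  obtain rfl : lam = fun i ↦ sobolevExpPairing (h i) := funext₂ hlam
  have hdiff i := differentiable_sobolevExpPairing (hC1 i) (hsupp i)
  have hcount : {a : ℂ | ∃ i, sobolevExpPairing (h i) a = 0}.Countable := by
    rw [ofPred_exists]
    refine countable_iUnion fun i ↦ ?_
    obtain ⟨a, ha⟩ := exists_sobolevExpPairing_ne_zero (hC1 i) (hsupp i) (hne i)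
    simpa [preimage] using countable_zeros_of_analyticOnNhd (fun z _ ↦ (hdiff i).analyticAt z)
      isPreconnected_univ ⟨a, mem_univ a, ha⟩
  obtain ⟨a, hpos, ha⟩ := exists_pos_ofReal_notMem_of_countable hcount
  exact ⟨hdiff, hcount, a, hpos, not_exists.1 ha⟩

end

/-- Lemma 4.1 of the paper: for a sequence `(h_i)_{i≥1}` of smooth,
compactly supported (in `(0,∞)`), not identically vanishing functions, the functions
`λ_i(a) = ∫_{[0,∞)} h_i e^{−ax} − a ∫_{[0,∞)} h_i' e^{−ax}` are entire, the set of
`a ∈ ℂ` where some `λ_i` vanishes is countable, and hence some real `a > 0` is a zero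
of no `λ_i`. -/
theorem exists_a_lambda_ne_zero (h : ℕ → ℝ → ℝ)
    (hsmooth : ∀ i, 1 ≤ i → ContDiff ℝ (⊤ : ℕ∞) (h i))
    (hsupp : ∀ i, 1 ≤ i → HasCompactSupport (h i))
    (hsupp' : ∀ i, 1 ≤ i → tsupport (h i) ⊆ Set.Ioi (0 : ℝ))
    (hne : ∀ i, 1 ≤ i → ∃ x : ℝ, h i x ≠ 0)
    (lam : ℕ → ℂ → ℂ)
    (hlam : ∀ i, 1 ≤ i → ∀ a : ℂ, lam i a =
      (∫ x in Set.Ici (0 : ℝ), (h i x : ℂ) * Complex.exp (-a * x)) -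
        a * ∫ x in Set.Ici (0 : ℝ), ((deriv (h i) x : ℝ) : ℂ) * Complex.exp (-a * x)) :
    (∀ i, 1 ≤ i → Differentiable ℂ (lam i)) ∧
    Set.Countable {a : ℂ | ∃ i, 1 ≤ i ∧ lam i a = 0} ∧
    ∃ a : ℝ, 0 < a ∧ ∀ i, 1 ≤ i → lam i (a : ℂ) ≠ 0 := by
  have hC1 (i : {i // 1 ≤ i}) : ContDiff ℝ 1 (h i) := (hsmooth i i.2).of_le (by simp)
  have hpairing (i : {i // 1 ≤ i}) (a : ℂ) :
      lam i a = sobolevExpPairing (Complex.ofReal ∘ h i) a :=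
    (hlam i i.2 a).trans (sobolevExpPairing_ofReal (hC1 i).differentiable_one a).symm
  have hne_nonneg (i : {i // 1 ≤ i}) : ∃ x, 0 ≤ x ∧ (Complex.ofReal ∘ h i) x ≠ 0 :=
    (hne i i.2).imp fun x hx ↦
      ⟨(hsupp' i i.2 (subset_tsupport _ hx)).le, Complex.ofReal_ne_zero.2 hx⟩
  simpa using exists_a_lambda_ne_zero_general (fun i : {i // 1 ≤ i} ↦ Complex.ofReal ∘ h i)
    (fun i ↦ Complex.ofRealCLM.contDiff.comp (hC1 i))
    (fun i ↦ (hsupp i i.2).comp_left Complex.ofReal_zero) hne_nonneg (fun i ↦ lam i) hpairing
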